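/- Under the MS-LS model with α_i + α_j = α for all pairs i, j, the first factorial moment of the nodal strength of a node within state k satisfies G̃_k′(1) = E[Y_t | s_t = k] = (N−1) e^α (4σ_k²β + 1)^{−d/2}, where G̃_k is the conditional probability generating function of the nodal strength given s_t = k. -/

import Mathlib

open MeasureTheory ProbabilityTheory Real

noncomputable section

/-- Density of the centered isotropic Gaussian `N(0, σ² I_d)` on `ℝ^d`. -/
def gaussPdf (d : ℕ) (σ2 : ℝ) (x : EuclideanSpace ℝ (Fin d)) : ℝ :=
  (2 * Real.pi * σ2) ^ (-(d : ℝ) / 2) * Real.exp (-‖x‖ ^ 2 / (2 * σ2))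

/-- The centered isotropic Gaussian measure `N(0, σ² I_d)` on `ℝ^d`. -/
def gaussMeasure (d : ℕ) (σ2 : ℝ) : Measure (EuclideanSpace ℝ (Fin d)) :=
  volume.withDensity fun x => ENNReal.ofReal (gaussPdf d σ2 x)

/-- Unordered pairs of distinct nodes, represented as ordered pairs `(i, j)` with `i < j`. -/
abbrev Pairs (N : ℕ) : Type := {p : Fin N × Fin N // p.1 < p.2}

/-- Joint law of the latent positions `(Z_i)_{i}` (i.i.d. `N(0, σ² I_d)`) and of the
edge weights `(Y_{ij})_{i<j}`, which given the latent positions are conditionally independent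
Poisson variables with intensity `exp (α_i + α_j - β ‖Z_i - Z_j‖²)`. -/
def jointLaw (d N : ℕ) (β : ℝ) (α : Fin N → ℝ) (σ2 : ℝ) :
    Measure ((Fin N → EuclideanSpace ℝ (Fin d)) × (Pairs N → ℕ)) :=
  (volume.withDensity fun z : Fin N → EuclideanSpace ℝ (Fin d) =>
      ENNReal.ofReal (∏ i, gaussPdf d σ2 (z i))).bind fun z =>
    (Measure.pi fun p : Pairs N =>
        poissonMeasure
          (Real.exp (α p.1.1 + α p.1.2 - β * ‖z p.1.1 - z p.1.2‖ ^ 2)).toNNReal).map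
      fun y => (z, y)

/-- The Markov-switching latent space (MS-LS) network model: a hidden `K`-state Markov chain
`s`, state-dependent i.i.d. Gaussian latent positions `Z`, and symmetric edge weights `Y`
that conditionally on the current state (and given the latent positions) are independent
Poisson variables with log-intensity `α i + α j - β ‖Z i k - Z j k‖²`. -/
structure MSLS (Ω : Type) [MeasurableSpace Ω] where
  /-- the underlying probability measure -/
  P : Measure Ω
  isProb : IsProbabilityMeasure P
  /-- the dimension of the latent space -/
  d : ℕ
  /-- the number of nodes -/
  N : ℕ
  /-- the number of states of the hidden Markov chain -/
  K : ℕ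
  β : ℝ
  β_pos : 0 < β
  /-- individual effects -/
  α : Fin N → ℝ
  /-- state-specific variances of the latent positions -/
  σ2 : Fin K → ℝ
  σ2_pos : ∀ k, 0 < σ2 k
  /-- transition probabilities of the hidden Markov chain -/
  q : Fin K → Fin K → ℝ
  q_nonneg : ∀ l k, 0 ≤ q l k
  q_sum : ∀ l, ∑ k, q l k = 1
  /-- the hidden Markov chain -/
  s : ℕ → Ω → Fin K
  s_meas : ∀ t, Measurable (s t)
  /-- the latent positions in each state -/
  Z : Fin N → Fin K → Ω → EuclideanSpace ℝ (Fin d)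
  Z_meas : ∀ i k, Measurable (Z i k)
  /-- the edge weights -/
  Y : Fin N → Fin N → ℕ → Ω → ℕ
  Y_meas : ∀ i j t, Measurable (Y i j t)
  Y_symm : ∀ i j t ω, Y i j t ω = Y j i t ω
  state_pos : ∀ t k, P {ω | s t ω = k} ≠ 0
  /-- Markov transition probabilities -/
  trans_prob : ∀ t l k, ((P[|{ω | s t ω = l}]) {ω | s (t + 1) ω = k}).toReal = q l k
  /-- conditionally on the current state, the latent positions and the edge weights follow
  the Poisson latent space law -/
  cond_law_state : ∀ t k,
    (P[|{ω | s t ω = k}]).map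
        (fun ω => ((fun i => Z i k ω), fun p : Pairs N => Y p.1.1 p.1.2 t ω)) =
      jointLaw d N β α (σ2 k)
  /-- conditionally on the previous and current state, the latent positions and the edge
  weights follow the Poisson latent space law of the current state -/
  cond_law_pair : ∀ t l k, q l k ≠ 0 →
    (P[|{ω | s t ω = l} ∩ {ω | s (t + 1) ω = k}]).map
        (fun ω => ((fun i => Z i k ω), fun p : Pairs N => Y p.1.1 p.1.2 (t + 1) ω)) =
      jointLaw d N β α (σ2 k)

attribute [instance] MSLS.isProb

/-- The nodal strength `Y_{it} = Σ_{j ≠ i} Y_{ijt}` of node `i` at time `t`. -/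
def MSLS.strength {Ω : Type} [MeasurableSpace Ω] (M : MSLS Ω) (i : Fin M.N) (t : ℕ)
    (ω : Ω) : ℕ :=
  ∑ j ∈ Finset.univ.erase i, M.Y i j t ω

end

/-! Given the positions, the edge weight between nodes `i ≠ j` has mean
`exp (α i + α j) * exp (-β * ‖Z i - Z j‖ ^ 2)`. Tilting the Gaussian law of `x` by
`exp (-β * ‖x - y‖ ^ 2)` and completing the square gives `(2 * σ2 * β + 1) ^ (-d / 2)` times
`exp (-β' * ‖y‖ ^ 2)` with `β' = β / (2 * σ2 * β + 1)`. Integrating over `y` is the same computation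
with `β'` in place of `β` and centre `0`, and the product of the two factors is
`(4 * σ2 * β + 1) ^ (-d / 2)`. The claim follows by summing over `j ≠ i`. -/

section General

theorem integral_natCast_eq_toReal_lintegral {Ω : Type*} [MeasurableSpace Ω] {μ : Measure Ω}
    {f : Ω → ℕ} (hf : Measurable f) :
    ∫ ω, (f ω : ℝ) ∂μ = (∫⁻ ω, (f ω : ENNReal) ∂μ).toReal := by
  rw [← integral_toReal (by fun_prop) (ae_of_all _ fun ω => ENNReal.natCast_lt_top _)]
  simp only [ENNReal.toReal_natCast]

theorem lintegral_natCast_poissonMeasure (r : NNReal) :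
    ∫⁻ n, (n : ENNReal) ∂(poissonMeasure r) = r := by
  have hshift (n : ℕ) :
      ((n + 1 : ℕ) : ENNReal) * poissonMeasure r {n + 1} = r * poissonMeasure r {n} := by
    rw [poissonMeasure_singleton, poissonMeasure_singleton, ← ENNReal.ofReal_natCast,
      ← ENNReal.ofReal_coe_nnreal, ← ENNReal.ofReal_mul (by positivity),
      ← ENNReal.ofReal_mul (by positivity), Nat.factorial_succ]
    push_cast
    congr 1
    field_simp
    ring
  have hmass : ∑' n, poissonMeasure r {n} = 1 := by
    simpa using (lintegral_countable' (μ := poissonMeasure r) fun _ => 1).symm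
  rw [lintegral_countable', tsum_eq_zero_add' ENNReal.summable, Nat.cast_zero, zero_mul, zero_add]
  simp only [hshift, ENNReal.tsum_mul_left, hmass, mul_one]

@[fun_prop]
theorem measurable_poissonMeasure : Measurable poissonMeasure := by
  refine Measure.measurable_of_measurable_coe _ fun s hs => ?_
  simp only [poissonMeasure, Measure.sum_apply _ hs, Measure.smul_apply, smul_eq_mul]
  fun_prop

theorem measurable_measurePi {α ι : Type*} {X : ι → Type*} [MeasurableSpace α] [Fintype ι]
    [∀ i, MeasurableSpace (X i)] {μ : α → ∀ i, Measure (X i)}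
    [∀ a i, IsProbabilityMeasure (μ a i)] (hμ : ∀ i, Measurable fun a => μ a i) :
    Measurable fun a => Measure.pi (μ a) := by
  refine .measure_of_isPiSystem_of_isProbabilityMeasure generateFrom_pi.symm isPiSystem_pi ?_
  rintro _ ⟨s, hs, rfl⟩
  simp only [Measure.pi_pi]
  exact Finset.measurable_prod _ fun i _ =>
    (Measure.measurable_coe (hs i (Set.mem_univ i))).comp (hμ i)

theorem bind_map_prodMk_eq_compProd {α γ : Type*} [MeasurableSpace α] [MeasurableSpace γ]
    (μ : Measure α) [SFinite μ] (κ : Kernel α γ) [IsSFiniteKernel κ] :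
    μ.bind (fun x => (κ x).map (Prod.mk x)) = μ ⊗ₘ κ := by
  rw [Measure.compProd_eq_comp_prod]
  congr 1
  ext1 x
  rw [Kernel.prod_apply, Kernel.id_apply, Measure.dirac_prod]

theorem withDensity_prod_eq_pi {ι : Type*} [Fintype ι] {X : ι → Type*}
    [∀ i, MeasurableSpace (X i)] {μ : ∀ i, Measure (X i)} [∀ i, SigmaFinite (μ i)]
    {f : ∀ i, X i → ℝ} (hf : ∀ i, Integrable (f i) (μ i)) (hf0 : ∀ i x, 0 ≤ f i x) :
    (Measure.pi μ).withDensity (fun x => ENNReal.ofReal (∏ i, f i (x i))) =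
      Measure.pi fun i => (μ i).withDensity fun x => ENNReal.ofReal (f i x) := by
  have (i : ι) := isFiniteMeasure_withDensity_ofReal (hf i).2
  refine (Measure.pi_eq fun s hs => ?_).symm
  have hbox : Integrable (fun x => ∏ i, f i (x i)) (Measure.pi fun i => (μ i).restrict (s i)) :=
    .fintype_prod_dep fun i => (hf i).integrableOn
  rw [withDensity_apply _ (.univ_pi hs), Measure.restrict_pi_pi,
    ← ofReal_integral_eq_lintegral_ofReal hbox
      (ae_of_all _ fun x => Finset.prod_nonneg fun i _ => hf0 i (x i)),
    integral_fintype_prod_eq_prod,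
    ENNReal.ofReal_prod_of_nonneg fun i _ => integral_nonneg (hf0 i)]
  refine Finset.prod_congr rfl fun i _ => ?_
  rw [withDensity_apply _ (hs i),
    ofReal_integral_eq_lintegral_ofReal (hf i).integrableOn (ae_of_all _ (hf0 i))]

variable {E : Type*} [NormedAddCommGroup E] [InnerProductSpace ℝ E]

theorem mul_norm_sq_add_mul_norm_sub_sq {u v : ℝ} (h : u + v ≠ 0) (x y : E) :
    u * ‖x‖ ^ 2 + v * ‖x - y‖ ^ 2 =
      (u + v) * ‖x - (v / (u + v)) • y‖ ^ 2 + u * v / (u + v) * ‖y‖ ^ 2 := by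
  rw [norm_sub_sq_real, norm_sub_sq_real, inner_smul_right, norm_smul, mul_pow, norm_eq_abs,
    sq_abs]
  field_simp
  ring

theorem lintegral_exp_neg_mul_norm_sub_sq [FiniteDimensional ℝ E] [MeasurableSpace E]
    [BorelSpace E] {b : ℝ} (hb : 0 < b) (y : E) :
    ∫⁻ x, ENNReal.ofReal (exp (-(b * ‖x - y‖ ^ 2))) =
      ENNReal.ofReal ((π / b) ^ (Module.finrank ℝ E / 2 : ℝ)) := by
  have h := GaussianFourier.integral_rexp_neg_mul_sq_norm (V := E) hb
  simp only [neg_mul] at h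
  rw [lintegral_sub_right_eq_self (fun x => ENNReal.ofReal (exp (-(b * ‖x‖ ^ 2)))) y, ← h,
    ofReal_integral_eq_lintegral_ofReal _ (ae_of_all _ fun x => (exp_pos _).le)]
  refine .of_integral_ne_zero ?_
  rw [h]
  positivity

end General

section Gaussian

variable (d : ℕ) {σ2 : ℝ}

theorem gaussPdf_nonneg (hσ : 0 ≤ σ2) (x : EuclideanSpace ℝ (Fin d)) : 0 ≤ gaussPdf d σ2 x := by
  unfold gaussPdf
  positivity

@[fun_prop]
theorem measurable_gaussPdf (σ2 : ℝ) : Measurable (gaussPdf d σ2) := by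
  unfold gaussPdf
  fun_prop

theorem lintegral_gaussMeasure {f : EuclideanSpace ℝ (Fin d) → ENNReal} (hf : Measurable f) :
    ∫⁻ x, f x ∂(gaussMeasure d σ2) = ∫⁻ x, ENNReal.ofReal (gaussPdf d σ2 x) * f x := by
  rw [gaussMeasure, lintegral_withDensity_eq_lintegral_mul _ (by fun_prop) hf]
  simp only [Pi.mul_apply]

theorem gaussPdf_mul_exp_neg_mul_norm_sub_sq {β : ℝ} (hσ : 0 < σ2) (hβ : 0 < 2 * σ2 * β + 1)
    (x y : EuclideanSpace ℝ (Fin d)) :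
    gaussPdf d σ2 x * exp (-(β * ‖x - y‖ ^ 2)) =
      (2 * π * σ2) ^ (-(d : ℝ) / 2) * exp (-(β / (2 * σ2 * β + 1) * ‖y‖ ^ 2)) *
        exp (-((2 * σ2 * β + 1) / (2 * σ2) *
          ‖x - (2 * σ2 * β / (2 * σ2 * β + 1)) • y‖ ^ 2)) := by
  have hsum : 1 / (2 * σ2) + β = (2 * σ2 * β + 1) / (2 * σ2) := by field_simp; ring
  have hsquare := mul_norm_sq_add_mul_norm_sub_sq (u := 1 / (2 * σ2)) (v := β)
    (by rw [hsum]; positivity) x y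
  have hcentre : β / ((2 * σ2 * β + 1) / (2 * σ2)) = 2 * σ2 * β / (2 * σ2 * β + 1) := by
    field_simp
  have hrest : 1 / (2 * σ2) * β / ((2 * σ2 * β + 1) / (2 * σ2)) = β / (2 * σ2 * β + 1) := by
    field_simp
  rw [hsum, hcentre, hrest] at hsquare
  rw [gaussPdf, mul_assoc, mul_assoc _ (exp _) (exp _), ← exp_add, ← exp_add]
  congr 2
  linear_combination -hsquare

theorem lintegral_exp_neg_mul_norm_sub_sq_gaussMeasure {β : ℝ} (hσ : 0 < σ2)
    (hβ : 0 < 2 * σ2 * β + 1) (y : EuclideanSpace ℝ (Fin d)) :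
    ∫⁻ x, ENNReal.ofReal (exp (-(β * ‖x - y‖ ^ 2))) ∂(gaussMeasure d σ2) =
      ENNReal.ofReal ((2 * σ2 * β + 1) ^ (-(d : ℝ) / 2)) *
        ENNReal.ofReal (exp (-(β / (2 * σ2 * β + 1) * ‖y‖ ^ 2))) := by
  have hnormalization : (2 * π * σ2) ^ (-(d : ℝ) / 2) *
      (π / ((2 * σ2 * β + 1) / (2 * σ2))) ^ ((d : ℝ) / 2) =
        (2 * σ2 * β + 1) ^ (-(d : ℝ) / 2) := by
    rw [neg_div, rpow_neg (by positivity), rpow_neg (by positivity), ← inv_rpow (by positivity),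
      ← inv_rpow (by positivity), ← mul_rpow (by positivity) (by positivity)]
    congr 1
    field_simp
  rw [lintegral_gaussMeasure d (by fun_prop)]
  simp only [← ENNReal.ofReal_mul (gaussPdf_nonneg d hσ.le _),
    gaussPdf_mul_exp_neg_mul_norm_sub_sq d hσ hβ]
  simp only [ENNReal.ofReal_mul' (exp_pos _).le]
  rw [lintegral_const_mul _ (by fun_prop), lintegral_exp_neg_mul_norm_sub_sq (by positivity),
    finrank_euclideanSpace_fin, mul_right_comm, ← ENNReal.ofReal_mul (by positivity),
    hnormalization]

theorem lintegral_exp_neg_mul_norm_sq_gaussMeasure {β : ℝ} (hσ : 0 < σ2)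
    (hβ : 0 < 2 * σ2 * β + 1) :
    ∫⁻ x, ENNReal.ofReal (exp (-(β * ‖x‖ ^ 2))) ∂(gaussMeasure d σ2) =
      ENNReal.ofReal ((2 * σ2 * β + 1) ^ (-(d : ℝ) / 2)) := by
  simpa using lintegral_exp_neg_mul_norm_sub_sq_gaussMeasure d hσ hβ 0

theorem isProbabilityMeasure_gaussMeasure (hσ : 0 < σ2) :
    IsProbabilityMeasure (gaussMeasure d σ2) where
  measure_univ := by
    simpa using lintegral_exp_neg_mul_norm_sq_gaussMeasure d (β := 0) hσ (by simp)

theorem integrable_gaussPdf (hσ : 0 < σ2) : Integrable (gaussPdf d σ2) := by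
  have hmass := (isProbabilityMeasure_gaussMeasure d hσ).measure_univ
  rw [gaussMeasure, withDensity_apply _ .univ, setLIntegral_univ] at hmass
  refine ⟨by fun_prop, ?_⟩
  rw [hasFiniteIntegral_iff_ofReal (ae_of_all _ (gaussPdf_nonneg d hσ.le)), hmass]
  exact ENNReal.one_lt_top

theorem lintegral_exp_neg_mul_norm_sub_sq_gaussMeasure_prod {τ2 β : ℝ} (hσ : 0 < σ2)
    (hτ : 0 < τ2) (hβ : 0 < 2 * (σ2 + τ2) * β + 1) :
    ∫⁻ p, ENNReal.ofReal (exp (-(β * ‖p.1 - p.2‖ ^ 2)))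
        ∂((gaussMeasure d σ2).prod (gaussMeasure d τ2)) =
      ENNReal.ofReal ((2 * (σ2 + τ2) * β + 1) ^ (-(d : ℝ) / 2)) := by
  have := isProbabilityMeasure_gaussMeasure d hσ
  have := isProbabilityMeasure_gaussMeasure d hτ
  have hinner : 0 < 2 * σ2 * β + 1 := by
    rcases le_total 0 β with h | h
    · positivity
    · nlinarith [mul_nonpos_of_nonneg_of_nonpos hτ.le h]
  have hfactors : (2 * σ2 * β + 1) * (2 * τ2 * (β / (2 * σ2 * β + 1)) + 1) =
      2 * (σ2 + τ2) * β + 1 := by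
    field_simp
    ring
  have houter : 0 < 2 * τ2 * (β / (2 * σ2 * β + 1)) + 1 :=
    (pos_iff_pos_of_mul_pos (hfactors ▸ hβ)).mp hinner
  rw [lintegral_prod_symm _ (by fun_prop)]
  simp only [lintegral_exp_neg_mul_norm_sub_sq_gaussMeasure d hσ hinner]
  rw [lintegral_const_mul _ (by fun_prop), lintegral_exp_neg_mul_norm_sq_gaussMeasure d hτ houter,
    ← ENNReal.ofReal_mul (by positivity), ← mul_rpow hinner.le houter.le, hfactors]

end Gaussian

section JointLaw

variable {d N : ℕ} (β : ℝ) (α : Fin N → ℝ)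

/-- The intensity `λ_{ij} = exp (α_i + α_j - β ‖z_i - z_j‖²)` of the edge `p = (i, j)`, given the
latent positions `z`. -/
noncomputable def edgeIntensity (z : Fin N → EuclideanSpace ℝ (Fin d)) (p : Pairs N) : NNReal :=
  (exp (α p.1.1 + α p.1.2 - β * ‖z p.1.1 - z p.1.2‖ ^ 2)).toNNReal

variable (d) in
/-- The conditional law of the edge weights given the latent positions, as a Markov kernel. -/
noncomputable def edgeKernel : Kernel (Fin N → EuclideanSpace ℝ (Fin d)) (Pairs N → ℕ) where
  toFun z := Measure.pi fun p => poissonMeasure (edgeIntensity β α z p)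
  measurable' := measurable_measurePi fun p => by
    unfold edgeIntensity
    fun_prop

instance : IsMarkovKernel (edgeKernel d β α) :=
  ⟨fun _ => inferInstanceAs (IsProbabilityMeasure (Measure.pi _))⟩

theorem lintegral_edgeKernel (z : Fin N → EuclideanSpace ℝ (Fin d)) (p : Pairs N) :
    ∫⁻ y, (y p : ENNReal) ∂(edgeKernel d β α z) = edgeIntensity β α z p := by
  rw [← lintegral_natCast_poissonMeasure]
  exact (measurePreserving_eval (fun p => poissonMeasure (edgeIntensity β α z p)) p
    ).lintegral_comp (f := fun n : ℕ => (n : ENNReal)) (by fun_prop)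

variable (d) {β} {σ2 : ℝ}

theorem jointLaw_eq_compProd (hσ : 0 < σ2) :
    jointLaw d N β α σ2 =
      (Measure.pi fun _ : Fin N => gaussMeasure d σ2) ⊗ₘ edgeKernel d β α := by
  have := isProbabilityMeasure_gaussMeasure d hσ
  rw [← bind_map_prodMk_eq_compProd, jointLaw, volume_pi,
    withDensity_prod_eq_pi (fun _ => integrable_gaussPdf d hσ) fun _ => gaussPdf_nonneg d hσ.le]
  rfl

theorem lintegral_edge_jointLaw (hσ : 0 < σ2) (hβ : 0 < 4 * σ2 * β + 1) (p : Pairs N) :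
    ∫⁻ w, (w.2 p : ENNReal) ∂(jointLaw d N β α σ2) =
      ENNReal.ofReal (exp (α p.1.1 + α p.1.2) * (4 * σ2 * β + 1) ^ (-(d : ℝ) / 2)) := by
  have := isProbabilityMeasure_gaussMeasure d hσ
  have hpair : (Measure.pi fun _ : Fin N => gaussMeasure d σ2).map
      (fun z => (z p.1.1, z p.1.2)) = (gaussMeasure d σ2).prod (gaussMeasure d σ2) := by
    rw [← Measure.infinitePi_eq_pi, Measure.infinitePi_map_eval_prod p.2.ne]
  have hmean (z : Fin N → EuclideanSpace ℝ (Fin d)) :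
      (edgeIntensity β α z p : ENNReal) = ENNReal.ofReal (exp (α p.1.1 + α p.1.2)) *
        ENNReal.ofReal (exp (-(β * ‖z p.1.1 - z p.1.2‖ ^ 2))) := by
    rw [← ENNReal.ofReal_mul (exp_pos _).le, ← exp_add, ← sub_eq_add_neg]
    rfl
  have hdouble : 4 * σ2 * β + 1 = 2 * (σ2 + σ2) * β + 1 := by ring
  rw [jointLaw_eq_compProd d α hσ, Measure.lintegral_compProd (by fun_prop)]
  simp only [lintegral_edgeKernel, hmean]
  rw [lintegral_const_mul _ (by fun_prop), ENNReal.ofReal_mul (exp_pos _).le,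
    hdouble, ← lintegral_exp_neg_mul_norm_sub_sq_gaussMeasure_prod d hσ hσ (hdouble ▸ hβ),
    ← hpair, lintegral_map (by fun_prop) (by fun_prop)]

end JointLaw

namespace MSLS

variable {Ω : Type} [MeasurableSpace Ω] (M : MSLS Ω)

@[fun_prop]
theorem measurable_strength (i : Fin M.N) (t : ℕ) : Measurable (M.strength i t) :=
  Finset.measurable_fun_sum _ fun j _ => M.Y_meas i j t

theorem lintegral_edge {i j : Fin M.N} (hij : i ≠ j) (t : ℕ) (k : Fin M.K) :
    ∫⁻ ω, (M.Y i j t ω : ENNReal) ∂(M.P[|{ω | M.s t ω = k}]) =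
      ENNReal.ofReal
        (exp (M.α i + M.α j) * (4 * M.σ2 k * M.β + 1) ^ (-(M.d : ℝ) / 2)) := by
  wlog hlt : i < j generalizing i j
  · simp only [M.Y_symm i j, add_comm (M.α i)]
    exact this hij.symm (hij.symm.lt_of_le (not_lt.mp hlt))
  have := M.Z_meas
  have := M.Y_meas
  have hβ : 0 < 4 * M.σ2 k * M.β + 1 := by
    have := M.β_pos
    have := M.σ2_pos k
    positivity
  rw [← lintegral_edge_jointLaw M.d M.α (M.σ2_pos k) hβ ⟨(i, j), hlt⟩,
    ← M.cond_law_state t k, lintegral_map (by fun_prop) (by fun_prop)]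

theorem lintegral_strength (i : Fin M.N) (t : ℕ) (k : Fin M.K) :
    ∫⁻ ω, (M.strength i t ω : ENNReal) ∂(M.P[|{ω | M.s t ω = k}]) =
      ENNReal.ofReal ((∑ j ∈ Finset.univ.erase i, exp (M.α i + M.α j)) *
        (4 * M.σ2 k * M.β + 1) ^ (-(M.d : ℝ) / 2)) := by
  have := M.Y_meas
  have := M.β_pos
  have := M.σ2_pos k
  simp only [strength, Nat.cast_sum]
  rw [lintegral_finsetSum _ (by fun_prop), Finset.sum_mul,
    ENNReal.ofReal_sum_of_nonneg fun j _ => by positivity]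
  exact Finset.sum_congr rfl fun j hj => M.lintegral_edge (Finset.ne_of_mem_erase hj).symm t k

end MSLS

theorem statement10_general {Ω : Type} [MeasurableSpace Ω] (M : MSLS Ω) (i : Fin M.N) (t : ℕ)
    (k : Fin M.K) :
    ∫ ω, (M.strength i t ω : ℝ) ∂(M.P[|{ω | M.s t ω = k}]) =
      (∑ j ∈ Finset.univ.erase i, exp (M.α i + M.α j)) *
        (4 * M.σ2 k * M.β + 1) ^ (-(M.d : ℝ) / 2) := by
  have := M.β_pos
  have := M.σ2_pos k
  rw [integral_natCast_eq_toReal_lintegral (by fun_prop), M.lintegral_strength,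
    ENNReal.toReal_ofReal (by positivity)]

/-- Under the MS-LS model with `α_i + α_j = α` for all pairs, the first
factorial moment of the nodal strength within state `k` (i.e. `G̃_k'(1) = E[Y_t | s_t = k]`)
equals `(N - 1) e^α (4σ_k²β + 1)^{-d/2}`. -/
theorem statement10 {Ω : Type} [MeasurableSpace Ω] (M : MSLS Ω) (a : ℝ)
    (hα : ∀ i j, M.α i + M.α j = a) (i : Fin M.N) (t : ℕ) (k : Fin M.K) :
    ∫ ω, (M.strength i t ω : ℝ) ∂(M.P[|{ω | M.s t ω = k}]) =
      ((M.N : ℝ) - 1) * Real.exp a * (4 * M.σ2 k * M.β + 1) ^ (-(M.d : ℝ) / 2) := by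
  simp [statement10_general, hα, Nat.cast_sub (Nat.one_le_of_lt i.pos)]
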